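/- For all n ≥ 2, β_n = (n+1)·β_{n-1} + n·(-1)^{n+1}. (Here the identity is between integers, with β_n regarded as an integer.) -/

import Mathlib

open Classical

noncomputable section

/-- `π` has at least one fixed point. -/
def hasFP {n : ℕ} (π : Equiv.Perm (Fin n)) : Prop := ∃ i, π i = i

/-- The set of (1-based) values of the fixed points of `π`, viewing a permutation of
`Fin n` as a permutation of `[n] = {1, …, n}` via `i ↦ i + 1`. -/
def fixVals {n : ℕ} (π : Equiv.Perm (Fin n)) : Set ℕ :=
  {k | ∃ i : Fin n, π i = i ∧ (i : ℕ) + 1 = k}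

/-- The largest fixed point `ℓ(π)` (in 1-based indexing). -/
def lfp {n : ℕ} (π : Equiv.Perm (Fin n)) : ℕ := sSup (fixVals π)

/-- The smallest fixed point `s(π)` (in 1-based indexing). -/
def sfp {n : ℕ} (π : Equiv.Perm (Fin n)) : ℕ := sInf (fixVals π)

/-- `d n` is the number of derangements of `[n]`. -/
def d (n : ℕ) : ℕ := Set.ncard {π : Equiv.Perm (Fin n) | ∀ i, π i ≠ i}

/-- `a n k` is the number of permutations of `[n]` with at least one fixed point
whose largest fixed point equals `k`. -/
def a (n k : ℕ) : ℕ := Set.ncard {π : Equiv.Perm (Fin n) | hasFP π ∧ lfp π = k}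

/-- `b n k` is the number of permutations of `[n]` with at least one fixed point
whose smallest fixed point equals `k`. -/
def b (n k : ℕ) : ℕ := Set.ncard {π : Equiv.Perm (Fin n) | hasFP π ∧ sfp π = k}

/-- `alpha n` is the sum of the largest fixed points over all non-derangements of `[n]`. -/
def alpha (n : ℕ) : ℕ :=
  ∑ π ∈ Finset.univ.filter (fun π : Equiv.Perm (Fin n) => hasFP π), lfp π

/-- `beta n` is the sum of the smallest fixed points over all non-derangements of `[n]`. -/
def beta (n : ℕ) : ℕ :=
  ∑ π ∈ Finset.univ.filter (fun π : Equiv.Perm (Fin n) => hasFP π), sfp π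

/-- permutations without fixed points among the first k -/
def nofix (n k : ℕ) : Finset (Equiv.Perm (Fin n)) :=
  Finset.univ.filter (fun π => ∀ i : Fin n, (i : ℕ) < k → π i ≠ i)

theorem nofix_zero (n : ℕ) : (nofix n 0).card = n.factorial := by
  simp [nofix, Fintype.card_perm]

theorem nofix_self (n : ℕ) : (nofix n n).card = numDerangements n := by
  rw [← card_derangements_fin_eq_numDerangements, Fintype.card_subtype]
  congr 1
  ext π
  simp only [nofix, Finset.mem_filter, Finset.mem_univ, true_and]
  exact ⟨fun h i => h i i.2, fun h i _ => h i⟩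

theorem fix_card (n : ℕ) (k : Fin (n+1)) :
    ((nofix (n+1) k).filter (fun π => π k = k)).card = (nofix n k).card := by
  symm
  have key : ∀ (σ : Equiv.Perm (Fin n)) (i : Fin n),
      (σ.extendDomain (finSuccAboveEquiv k)) (k.succAbove i) = k.succAbove (σ i) := by
    intro σ i
    exact Equiv.Perm.extendDomain_apply_image σ (finSuccAboveEquiv k) i
  have keyk : ∀ (σ : Equiv.Perm (Fin n)),
      (σ.extendDomain (finSuccAboveEquiv k)) k = k := by
    intro σ
    exact Equiv.Perm.extendDomain_apply_not_subtype σ _ (by simp)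
  refine Finset.card_bij (fun σ _ => σ.extendDomain (finSuccAboveEquiv k)) ?_ ?_ ?_
  · intro σ hσ
    simp only [nofix, Finset.mem_filter, Finset.mem_univ, true_and] at hσ ⊢
    refine ⟨?_, keyk σ⟩
    intro i hi
    obtain ⟨j, rfl⟩ := Fin.exists_succAbove_eq (x := i) (y := k) (by rintro rfl; omega)
    rw [key]
    intro h
    refine hσ j ?_ (Fin.succAbove_right_injective h)
    have := Fin.succAbove_lt_iff_castSucc_lt k j
    simp only [Fin.lt_def] at this
    exact this.1 hi
  · intro σ _ τ _ h
    exact Equiv.Perm.extendDomainHom_injective (finSuccAboveEquiv k) h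
  · intro π hπ
    simp only [nofix, Finset.mem_filter, Finset.mem_univ, true_and] at hπ
    have hk := hπ.2
    let τ : Equiv.Perm {x // x ≠ k} := π.subtypePerm (p := fun x => x ≠ k)
      (fun x => by
        rw [not_iff_not]
        constructor
        · intro h; exact π.injective (h.trans hk.symm)
        · rintro rfl; exact hk)
    let σ : Equiv.Perm (Fin n) :=
      ((finSuccAboveEquiv k).trans τ).trans (finSuccAboveEquiv k).symm
    have hs : ∀ j, k.succAbove (σ j) = π (k.succAbove j) := by
      intro j
      have : (finSuccAboveEquiv k) (σ j) = τ (finSuccAboveEquiv k j) := by simp [σ]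
      exact congrArg Subtype.val this
    refine ⟨σ, ?_, ?_⟩
    · simp only [nofix, Finset.mem_filter, Finset.mem_univ, true_and]
      intro j hj h
      refine hπ.1 (k.succAbove j) ?_ (by rw [← hs, h])
      have := Fin.succAbove_lt_iff_castSucc_lt k j
      simp only [Fin.lt_def] at this
      exact this.2 hj
    · ext1 i
      by_cases hi : i = k
      · subst hi; rw [keyk, hk]
      · obtain ⟨j, rfl⟩ := Fin.exists_succAbove_eq hi
        rw [key, hs]

theorem nofix_rec (n k : ℕ) (hk : k < n + 1) :
    (nofix (n+1) k).card = (nofix (n+1) (k+1)).card + (nofix n k).card := by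
  have h := fix_card n ⟨k, hk⟩
  simp only at h
  rw [← h, ← Finset.card_filter_add_card_filter_not (s := nofix (n+1) k) (fun π => π ⟨k, hk⟩ = ⟨k, hk⟩), add_comm]
  congr 2
  ext π
  simp only [nofix, Finset.mem_filter, Finset.mem_univ, true_and]
  constructor
  · rintro ⟨h1, h2⟩ i hi
    rcases Nat.lt_succ_iff_lt_or_eq.1 hi with h | h
    · exact h1 i h
    · have : i = ⟨k, hk⟩ := Fin.ext h
      rw [this]; exact h2
  · intro h
    exact ⟨fun i hi => h i (by omega), h _ (by simp)⟩

theorem tel (n m : ℕ) (hm : m ≤ n + 1) :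
    ∑ k ∈ Finset.range m, (nofix n k).card + (nofix (n+1) m).card = (n+1).factorial := by
  induction m with
  | zero => simp [nofix_zero]
  | succ m ih =>
    have := ih (by omega)
    have h2 := nofix_rec n m (by omega)
    rw [Finset.sum_range_succ]
    omega

theorem sfp_eq {n : ℕ} (π : Equiv.Perm (Fin n)) (h : hasFP π) :
    sfp π = ((Finset.range n).filter (fun k => π ∈ nofix n k)).card := by
  have hne : (fixVals π).Nonempty := by
    obtain ⟨i, hi⟩ := h
    exact ⟨_, i, hi, rfl⟩
  obtain ⟨m, hm, hm'⟩ := Nat.sInf_mem hne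
  have hs : sfp π = m + 1 := hm'.symm
  have hmin : ∀ i, π i = i → (m : ℕ) ≤ i := by
    intro i hi
    have : sfp π ≤ (i : ℕ) + 1 := Nat.sInf_le ⟨i, hi, rfl⟩
    omega
  rw [hs]
  have : (Finset.range n).filter (fun k => π ∈ nofix n k) = Finset.range (m + 1) := by
    ext k
    simp only [nofix, Finset.mem_filter, Finset.mem_univ, true_and, Finset.mem_range]
    constructor
    · rintro ⟨_, h2⟩
      by_contra hc
      exact h2 m (by omega) hm
    · intro hk
      refine ⟨by omega, fun i hi h => ?_⟩
      have := hmin i h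
      omega
  rw [this, Finset.card_range]

theorem beta_eq (n : ℕ) :
    beta n + n * numDerangements n = ∑ k ∈ Finset.range n, (nofix n k).card := by
  have h1 : ∑ k ∈ Finset.range n, (nofix n k).card =
      ∑ π : Equiv.Perm (Fin n), ((Finset.range n).filter (fun k => π ∈ nofix n k)).card := by
    simp only [Finset.card_filter]
    rw [Finset.sum_comm]
    refine Finset.sum_congr rfl fun k _ => ?_
    rw [← Finset.card_filter]
    congr 1
    ext π
    simp
  rw [h1, ← Finset.sum_filter_add_sum_filter_not _ (fun π : Equiv.Perm (Fin n) => hasFP π), beta]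
  congr 1
  · refine Finset.sum_congr rfl fun π hπ => ?_
    exact sfp_eq π (Finset.mem_filter.1 hπ).2
  · have h2 : Finset.univ.filter (fun π : Equiv.Perm (Fin n) => ¬ hasFP π) = nofix n n := by
      ext π
      simp [nofix, hasFP]
    rw [h2, Finset.sum_congr rfl (g := fun _ => n), Finset.sum_const, nofix_self, smul_eq_mul, mul_comm]
    intro π hπ
    rw [Finset.filter_true_of_mem, Finset.card_range]
    intro k _
    simp only [nofix, Finset.mem_filter, Finset.mem_univ, true_and] at hπ ⊢
    exact fun i _ => hπ i i.2

theorem beta_closed (n : ℕ) :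
    beta n + (n + 1) * numDerangements n + numDerangements (n + 1) = (n + 1).factorial := by
  have h1 := beta_eq n
  have h2 := tel n n (by omega)
  have h3 := nofix_rec n n (by omega)
  rw [nofix_self, nofix_self] at h3
  rw [add_mul]
  omega

theorem stmt13 (n : ℕ) (hn : 2 ≤ n) :
    (beta n : ℤ) = (n + 1) * beta (n - 1) + n * (-1) ^ (n + 1) := by
  obtain ⟨m, rfl⟩ : ∃ m, n = m + 1 := ⟨n - 1, by omega⟩
  have h1 := beta_closed (m + 1)
  have h2 := beta_closed m
  have h3 := numDerangements_succ m
  have h4 := numDerangements_succ (m + 1)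
  rw [Nat.factorial_succ] at h1
  zify at h1 h2
  push_cast at *
  try simp only [Nat.add_sub_cancel]
  rw [h4, h3, ← h2, h3] at h1
  rw [pow_succ, pow_succ] at *
  linear_combination h1
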